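/- (Linearized form of Theorem 1.) Let n ≥ 1, let ‖·‖ be a norm on ℝⁿ with dual norm ‖g‖_* = sup{⟨g,v⟩ : ‖v‖ ≤ 1}. Let B ≥ 1, let J₁,…,J_B ∈ ℝ, let g₁,…,g_B ∈ ℝⁿ not all zero, let p > 1 and ε > 0. For λ > 0 define G(λ) = (1/B)·Σ_{b=1}^{B} inf_{v ∈ ℝⁿ} [ J_b + ⟨g_b, v⟩ + λ‖v‖^p ] − λ·ε^p. Then the supremum of G over λ > 0 is attained and equals (1/B)·Σ_{b=1}^{B} J_b − ε·( (1/B)·Σ_{b=1}^{B} ‖g_b‖_*^{p/(p−1)} )^{(p−1)/p}. -/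

import Mathlib

/-!
Write `d b` for the dual norm of `g b` and `S` for the mean of `d b ^ (p / (p - 1))`; then `S > 0`.
Minimising over the direction of `v` first reduces each inner infimum to that of
`r ↦ J b - d b * r + l * r ^ p` over `r ≥ 0`.

The radii `r b = ε * d b ^ (1 / (p - 1)) / S ^ (1 / p)` are primal optimal: `r b ^ p` has
mean `ε ^ p`. Using them as test points in the infima (`inner_inf_le`) makes the
terms in `l` cancel, so that `G l ≤ V` for every `l > 0`, where `V` is the claimed value. For
`l = S ^ ((p - 1) / p) / (p * ε ^ (p - 1))` the stationarity condition `d b = p * l * r b ^ (p - 1)`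
holds for all `b` at once, so by Young's inequality the test points are minimisers
(`le_inner`) and `G l = V`.
-/

/-- A norm on `ℝⁿ` dominates a multiple of the sup norm, by compactness of the unit sphere. -/
lemma exists_norm_le {n : ℕ} (N : (Fin n → ℝ) → ℝ)
    (hN_eq : ∀ x, N x = 0 ↔ x = 0)
    (hN_smul : ∀ (a : ℝ) (x), N (a • x) = |a| * N x)
    (hN_add : ∀ x y, N (x + y) ≤ N x + N y) (hN0 : ∀ x, 0 ≤ N x) :
    ∃ C : ℝ, 0 ≤ C ∧ ∀ v, ‖v‖ ≤ C * N v := by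
  have hconv : ConvexOn ℝ Set.univ N := by
    refine ⟨convex_univ, fun x _ y _ a b ha hb _ => ?_⟩
    have h := hN_add (a • x) (b • y)
    rw [hN_smul, hN_smul, abs_of_nonneg ha, abs_of_nonneg hb] at h
    simpa using h
  have hcont : Continuous N := by
    simpa [continuousOn_univ] using hconv.continuousOn isOpen_univ
  rcases (Metric.sphere (0 : Fin n → ℝ) 1).eq_empty_or_nonempty with he | hne
  · refine ⟨0, le_rfl, fun v => ?_⟩
    by_contra! h
    have hv : 0 < ‖v‖ := by simpa using h
    have : (‖v‖⁻¹ • v) ∈ Metric.sphere (0 : Fin n → ℝ) 1 := by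
      simp [norm_smul, hv.ne']
    simp [he] at this
  · obtain ⟨x, hx, hmin⟩ :=
      (isCompact_sphere (0 : Fin n → ℝ) 1).exists_isMinOn hne hcont.continuousOn
    have hx1 : ‖x‖ = 1 := by simpa using hx
    have hNx : 0 < N x := by
      refine lt_of_le_of_ne (hN0 x) fun h => ?_
      rw [(hN_eq x).1 h.symm] at hx1
      simp at hx1
    refine ⟨(N x)⁻¹, by positivity, fun v => ?_⟩
    rcases eq_or_ne v 0 with rfl | hv0
    · simpa using mul_nonneg (inv_nonneg.2 hNx.le) (hN0 0)
    have hv : 0 < ‖v‖ := norm_pos_iff.2 hv0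
    have hmem : (‖v‖⁻¹ • v) ∈ Metric.sphere (0 : Fin n → ℝ) 1 := by
      simp [norm_smul, hv.ne']
    have h : N x ≤ N (‖v‖⁻¹ • v) := hmin hmem
    rw [hN_smul, abs_of_pos (by positivity)] at h
    rw [inv_mul_eq_div, le_div_iff₀ hNx]
    calc ‖v‖ * N x ≤ ‖v‖ * (‖v‖⁻¹ * N v) := by gcongr
      _ = N v := by field_simp

/-- The supremum defining the dual norm is over a bounded set, hence is not a junk value. -/
lemma dual_bddAbove {n : ℕ} (N : (Fin n → ℝ) → ℝ)
    (hN_eq : ∀ x, N x = 0 ↔ x = 0)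
    (hN_smul : ∀ (a : ℝ) (x), N (a • x) = |a| * N x)
    (hN_add : ∀ x y, N (x + y) ≤ N x + N y) (hN0 : ∀ x, 0 ≤ N x) (g : Fin n → ℝ) :
    BddAbove {r : ℝ | ∃ v, N v ≤ 1 ∧ r = ∑ i, g i * v i} := by
  obtain ⟨C, hC, h⟩ := exists_norm_le N hN_eq hN_smul hN_add hN0
  refine ⟨∑ i, |g i| * C, ?_⟩
  rintro _ ⟨v, hv, rfl⟩
  refine Finset.sum_le_sum fun i _ => ?_
  have h1 : |v i| ≤ C := by
    have := norm_le_pi_norm v i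
    rw [Real.norm_eq_abs] at this
    nlinarith [h v]
  calc g i * v i ≤ |g i * v i| := le_abs_self _
    _ = |g i| * |v i| := abs_mul _ _
    _ ≤ |g i| * C := by gcongr

/-- Duality inequality, in the form of a lower bound. -/
lemma neg_dual_mul_le {n : ℕ} (N : (Fin n → ℝ) → ℝ)
    (hN_eq : ∀ x, N x = 0 ↔ x = 0)
    (hN_smul : ∀ (a : ℝ) (x), N (a • x) = |a| * N x)
    (hN0 : ∀ x, 0 ≤ N x) (g : Fin n → ℝ) (d : ℝ)
    (hd : ∀ v, N v ≤ 1 → ∑ i, g i * v i ≤ d) (v : Fin n → ℝ) :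
    -d * N v ≤ ∑ i, g i * v i := by
  rcases eq_or_ne v 0 with rfl | hv
  · simp [(hN_eq 0).2 rfl]
  have hNv : 0 < N v := lt_of_le_of_ne (hN0 v) fun h => hv ((hN_eq v).1 h.symm)
  have h := hd ((-(N v)⁻¹) • v) (by
    rw [hN_smul, abs_neg, abs_of_pos (by positivity)]
    exact (inv_mul_cancel₀ hNv.ne').le)
  have e : ∑ i, g i * ((-(N v)⁻¹) • v) i = -(∑ i, g i * v i) / N v := by
    rw [neg_div, Finset.sum_div, ← Finset.sum_neg_distrib]
    refine Finset.sum_congr rfl fun i _ => ?_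
    simp only [Pi.smul_apply, smul_eq_mul]
    field_simp
  rw [e, div_le_iff₀ hNv] at h
  linarith

/-- Young's inequality: a stationary point `r` of `s ↦ -d * s + l * s ^ p` is a global minimiser
over `s ≥ 0`. -/
lemma stationary_min {p l d r s : ℝ} (hp : 1 < p) (hl : 0 < l) (hr : 0 ≤ r) (hs : 0 ≤ s)
    (hd : d = p * l * r ^ (p - 1)) :
    -d * r + l * r ^ p ≤ -d * s + l * s ^ p := by
  have hp1 : 0 < p - 1 := by linarith
  have hpq : p.HolderConjugate (p / (p - 1)) := Real.HolderConjugate.conjExponent hp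
  have hy := Real.young_inequality_of_nonneg hs (Real.rpow_nonneg hr (p - 1)) hpq
  rw [← Real.rpow_mul hr, mul_div_cancel₀ _ hp1.ne'] at hy
  have hrr : r ^ (p - 1) * r = r ^ p := by
    have := Real.rpow_add_one' hr (y := p - 1) (by linarith)
    rw [← this, sub_add_cancel]
  have h2 : p * (s * r ^ (p - 1)) ≤ s ^ p + (p - 1) * r ^ p := by
    have := mul_le_mul_of_nonneg_left hy (by linarith : 0 ≤ p)
    refine this.trans_eq ?_
    field_simp
  have e1 : d * r = p * l * r ^ p := by rw [hd, ← hrr]; ring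
  have e2 : d * s = l * (p * (s * r ^ (p - 1))) := by rw [hd]; ring
  nlinarith [mul_le_mul_of_nonneg_left h2 hl.le]

/-- The integrand is bounded below by its value `J - d * r + l * r ^ p` at a stationary radius. -/
lemma le_inner {n : ℕ} (N : (Fin n → ℝ) → ℝ) (hN0 : ∀ x, 0 ≤ N x)
    (g : Fin n → ℝ) {d p l r J : ℝ}
    (hdual : ∀ v, -d * N v ≤ ∑ i, g i * v i) (hp : 1 < p) (hl : 0 < l)
    (hr : 0 ≤ r) (hd : d = p * l * r ^ (p - 1)) (v : Fin n → ℝ) :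
    J - d * r + l * r ^ p ≤ J + ∑ i, g i * v i + l * N v ^ p := by
  have := stationary_min hp hl hr (hN0 v) hd
  linarith [hdual v]

/-- Test points of norm at most `r`, in directions nearly attaining the dual norm, bound the inner
infimum from above. -/
lemma inner_inf_le {n : ℕ} (N : (Fin n → ℝ) → ℝ)
    (hN_eq : ∀ x, N x = 0 ↔ x = 0)
    (hN_smul : ∀ (a : ℝ) (x), N (a • x) = |a| * N x) (hN0 : ∀ x, 0 ≤ N x)
    (g : Fin n → ℝ) {d p l r J : ℝ} (hd0 : 0 ≤ d)
    (hd : IsLUB {r : ℝ | ∃ v, N v ≤ 1 ∧ r = ∑ i, g i * v i} d)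
    (hp : 1 < p) (hl : 0 < l) (hr : 0 ≤ r) :
    sInf {y : ℝ | ∃ v : Fin n → ℝ, y = J + ∑ i, g i * v i + l * N v ^ p}
      ≤ J - d * r + l * r ^ p := by
  have hp0 : 0 < p := by linarith
  have hp1 : p - 1 ≠ 0 := by linarith
  have hdual := neg_dual_mul_le N hN_eq hN_smul hN0 g d (fun v hv => hd.1 ⟨v, hv, rfl⟩)
  -- The stationary radius for this `l` shows that the infimum is over a set bounded below.
  have hbdd : BddBelow {y : ℝ | ∃ v : Fin n → ℝ, y = J + ∑ i, g i * v i + l * N v ^ p} := by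
    have hq : 0 ≤ d / (p * l) := by positivity
    refine ⟨J - d * (d / (p * l)) ^ (p - 1)⁻¹ + l * ((d / (p * l)) ^ (p - 1)⁻¹) ^ p, ?_⟩
    rintro _ ⟨v, rfl⟩
    refine le_inner N hN0 g hdual hp hl (by positivity) ?_ v
    rw [Real.rpow_inv_rpow hq hp1]
    field_simp
  have key : ∀ v, N v ≤ 1 →
      sInf {y : ℝ | ∃ v : Fin n → ℝ, y = J + ∑ i, g i * v i + l * N v ^ p}
        ≤ J - r * (∑ i, g i * v i) + l * r ^ p := by
    intro v hv
    refine (csInf_le hbdd ⟨(-r) • v, rfl⟩).trans ?_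
    have e : ∑ i, g i * ((-r) • v) i = -(r * ∑ i, g i * v i) := by
      rw [Finset.mul_sum, ← Finset.sum_neg_distrib]
      refine Finset.sum_congr rfl fun i _ => ?_
      simp only [Pi.smul_apply, smul_eq_mul]
      ring
    have h1 : N ((-r) • v) ≤ r := by
      rw [hN_smul, abs_neg, abs_of_nonneg hr]
      nlinarith
    have h2 : N ((-r) • v) ^ p ≤ r ^ p := Real.rpow_le_rpow (hN0 _) h1 hp0.le
    rw [e]
    nlinarith
  rcases hr.eq_or_lt with rfl | hr
  · simpa using key 0 (by simp [(hN_eq 0).2 rfl])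
  have h : d ≤ (J + l * r ^ p -
      sInf {y : ℝ | ∃ v : Fin n → ℝ, y = J + ∑ i, g i * v i + l * N v ^ p}) / r := by
    refine hd.2 ?_
    rintro _ ⟨v, hv, rfl⟩
    rw [le_div_iff₀ hr]
    linarith [key v hv]
  rw [le_div_iff₀ hr] at h
  linarith


/-- linearized form of Theorem 1: for an arbitrary norm `N` on ℝⁿ
with dual norm `dualN`, ensemble data `J b`, `g b` (not all `g b` zero),
`p > 1`, `ε > 0`, the dual objective
`G(λ) = (1/B)·Σ_b inf_v [J_b + ⟨g_b,v⟩ + λ(N v)^p] − λ·ε^p` attains its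
supremum over `λ > 0`, which equals
`(1/B)·Σ_b J_b − ε·((1/B)·Σ_b ‖g_b‖_*^{p/(p−1)})^{(p−1)/p}`. -/
theorem stmt_8 (n : ℕ) (hn : 1 ≤ n)
    (N : (Fin n → ℝ) → ℝ)
    (hN_eq : ∀ x, N x = 0 ↔ x = 0)
    (hN_smul : ∀ (a : ℝ) (x), N (a • x) = |a| * N x)
    (hN_add : ∀ x y, N (x + y) ≤ N x + N y)
    (dualN : (Fin n → ℝ) → ℝ)
    (hdual : ∀ g, dualN g = sSup {r : ℝ | ∃ v, N v ≤ 1 ∧ r = ∑ i, g i * v i})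
    (B : ℕ) (hB : 1 ≤ B) (J : Fin B → ℝ) (g : Fin B → Fin n → ℝ)
    (hg : ∃ b, g b ≠ 0) (p ε : ℝ) (hp : 1 < p) (hε : 0 < ε)
    (G : ℝ → ℝ)
    (hG : ∀ l : ℝ, G l = (1 / (B : ℝ)) *
        ∑ b, sInf {r : ℝ | ∃ v : Fin n → ℝ,
          r = J b + ∑ i, g b i * v i + l * N v ^ p} - l * ε ^ p) :
    IsGreatest {y : ℝ | ∃ l : ℝ, 0 < l ∧ y = G l}
      ((1 / (B : ℝ)) * ∑ b, J b
        - ε * ((1 / (B : ℝ)) * ∑ b, dualN (g b) ^ (p / (p - 1))) ^ ((p - 1) / p)) := by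
  have hN0 : ∀ x, 0 ≤ N x := fun x => by
    have h := hN_add x ((-1 : ℝ) • x)
    rw [hN_smul] at h
    have h0 : N (x + (-1 : ℝ) • x) = 0 := (hN_eq _).2 (by simp)
    rw [h0] at h
    norm_num at h
    linarith
  have hp0 : 0 < p := by linarith
  have hp1 : 0 < p - 1 := by linarith
  have hBpos : (0 : ℝ) < B := by exact_mod_cast hB
  have hlub : ∀ g, IsLUB {r : ℝ | ∃ v, N v ≤ 1 ∧ r = ∑ i, g i * v i} (dualN g) := fun g => by
    rw [hdual]
    exact isLUB_csSup ⟨_, 0, by simp [(hN_eq 0).2 rfl], rfl⟩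
      (dual_bddAbove N hN_eq hN_smul hN_add hN0 g)
  have hd0 : ∀ g, 0 ≤ dualN g := fun g =>
    (hlub g).1 ⟨0, by simp [(hN_eq 0).2 rfl], by simp⟩
  have hdpos : ∀ g, g ≠ 0 → 0 < dualN g := fun g hg => by
    refine lt_of_le_of_ne (hd0 g) fun h => ?_
    -- Pair `g` with `-g`.
    have h1 := neg_dual_mul_le N hN_eq hN_smul hN0 g (dualN g)
      (fun v hv => (hlub g).1 ⟨v, hv, rfl⟩) (-g)
    rw [← h] at h1
    have h2 : 0 ≤ ∑ i, g i * (-g) i := by simpa using h1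
    have h3 : ∑ i, g i * g i = 0 := by
      refine le_antisymm ?_ (Finset.sum_nonneg fun i _ => mul_self_nonneg _)
      simp only [Pi.neg_apply, mul_neg, Finset.sum_neg_distrib] at h2
      linarith
    rw [Finset.sum_eq_zero_iff_of_nonneg fun i _ => mul_self_nonneg _] at h3
    exact hg (funext fun i => mul_self_eq_zero.1 (h3 i (Finset.mem_univ i)))
  set S : ℝ := (1 / (B : ℝ)) * ∑ b, dualN (g b) ^ (p / (p - 1)) with hS
  have hSpos : 0 < S := by
    obtain ⟨b, hb⟩ := hg
    refine mul_pos (by positivity) (Finset.sum_pos' (fun i _ => Real.rpow_nonneg (hd0 _) _)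
      ⟨b, Finset.mem_univ b, Real.rpow_pos_of_pos (hdpos _ hb) _⟩)
  -- The primal optimal radii.
  set r : Fin B → ℝ := fun b => ε * dualN (g b) ^ (1 / (p - 1)) / S ^ (1 / p) with hr
  have hr0 : ∀ b, 0 ≤ r b := fun b => by
    have := Real.rpow_nonneg (hd0 (g b)) (1 / (p - 1))
    simp only [hr]
    positivity
  have hrpow : ∀ (b : Fin B) (t : ℝ),
      r b ^ t = ε ^ t * dualN (g b) ^ (t / (p - 1)) / S ^ (t / p) := fun b t => by
    have h1 := Real.rpow_nonneg (hd0 (g b)) (1 / (p - 1))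
    simp only [hr]
    rw [Real.div_rpow (by positivity) (by positivity), Real.mul_rpow hε.le h1,
      ← Real.rpow_mul (hd0 _), ← Real.rpow_mul hSpos.le, one_div_mul_eq_div, one_div_mul_eq_div]
  have hmean_p : (1 / (B : ℝ)) * ∑ b, r b ^ p = ε ^ p := by
    have : ∀ b, r b ^ p = ε ^ p / S * dualN (g b) ^ (p / (p - 1)) := fun b => by
      rw [hrpow, div_self hp0.ne', Real.rpow_one]
      ring
    simp_rw [this]
    rw [← Finset.mul_sum, mul_left_comm, ← hS]
    field_simp
  have hmean_d : (1 / (B : ℝ)) * ∑ b, dualN (g b) * r b = ε * S ^ ((p - 1) / p) := by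
    have : ∀ b, dualN (g b) * r b = ε / S ^ (1 / p) * dualN (g b) ^ (p / (p - 1)) := fun b => by
      have e : p / (p - 1) = 1 / (p - 1) + 1 := by field_simp; ring
      rw [e, Real.rpow_add_one' (hd0 _) (by positivity)]
      simp only [hr]
      ring
    simp_rw [this]
    rw [← Finset.mul_sum, mul_left_comm, ← hS]
    have e : (p - 1) / p = 1 - 1 / p := by field_simp
    rw [e, Real.rpow_sub hSpos, Real.rpow_one]
    ring
  -- By the two mean identities, the objective at the radii `r` is the claimed value for every `l`.
  have hval : ∀ l : ℝ, (1 / (B : ℝ)) * ∑ b, (J b - dualN (g b) * r b + l * r b ^ p) - l * ε ^ p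
      = (1 / (B : ℝ)) * ∑ b, J b - ε * S ^ ((p - 1) / p) := fun l => by
    rw [Finset.sum_add_distrib, Finset.sum_sub_distrib, ← Finset.mul_sum, mul_add, mul_sub,
      hmean_d, mul_left_comm, hmean_p]
    ring
  have hle : ∀ l, 0 < l → G l ≤ (1 / (B : ℝ)) * ∑ b, J b - ε * S ^ ((p - 1) / p) := fun l hl => by
    rw [hG, ← hval l]
    gcongr with b
    exact inner_inf_le N hN_eq hN_smul hN0 (g b) (hd0 _) (hlub _) hp hl (hr0 b)
  refine ⟨?_, by rintro _ ⟨l, hl, rfl⟩; exact hle l hl⟩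
  -- This `l` makes every radius `r b` stationary simultaneously.
  obtain ⟨l, hldef⟩ : ∃ l, l = S ^ ((p - 1) / p) / (p * ε ^ (p - 1)) := ⟨_, rfl⟩
  have hl : 0 < l := by rw [hldef]; positivity
  refine ⟨l, hl, le_antisymm ?_ (hle l hl)⟩
  rw [hG, ← hval l]
  gcongr with b
  refine le_csInf ⟨_, 0, rfl⟩ ?_
  rintro _ ⟨v, rfl⟩
  refine le_inner N hN0 (g b) (neg_dual_mul_le N hN_eq hN_smul hN0 _ _
    fun v hv => (hlub _).1 ⟨v, hv, rfl⟩) hp hl (hr0 b) ?_ v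
  rw [hrpow, div_self hp1.ne', Real.rpow_one, hldef]
  have := Real.rpow_pos_of_pos hSpos ((p - 1) / p)
  have := Real.rpow_pos_of_pos hε (p - 1)
  field_simp
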